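/- arXiv:2502.14252 — 3 statements merged into one kernel-verified Lean document; each statement's English description precedes it below -/
import Mathlib

section
/- Let α : ℝ → ℝ be differentiable and strictly positive, let ε : ℝ → E be continuous (E a real Banach space), and let x : ℝ → E be differentiable on [s,t] (s < t) satisfying for all λ ∈ [s,t] the diffusion ODE in the log-SNR variable: x'(λ) = (α'(λ)/α(λ)) • x(λ) − (α(λ) · exp(−λ)) • ε(λ). Then the rescaled solution satisfies the exact exponential-integrator identity (1/α(t)) • x(t) = (1/α(s)) • x(s) − ∫_{s}^{t} exp(−λ) • ε(λ) dλ. -/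
open MeasureTheory intervalIntegral

/-- Exact exponential-integrator solution formula for the diffusion probability-flow ODE
in the log-SNR variable: if `x' λ = (α' λ / α λ) • x λ - (α λ * e^{-λ}) • ε λ` on `[s, t]`,
then `(1/α t) • x t = (1/α s) • x s - ∫ λ in s..t, e^{-λ} • ε λ`. -/
theorem dpm_exact_solution_formula
    {E : Type*} [NormedAddCommGroup E] [NormedSpace ℝ E] [CompleteSpace E]
    (α : ℝ → ℝ) (hα : Differentiable ℝ α) (hαpos : ∀ lam, 0 < α lam)
    (ε : ℝ → E) (hε : Continuous ε)
    (x : ℝ → E) (s t : ℝ) (hst : s < t)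
    (hx : ∀ lam ∈ Set.Icc s t,
      HasDerivAt x ((deriv α lam / α lam) • x lam
        - (α lam * Real.exp (-lam)) • ε lam) lam) :
    (1 / α t) • x t = (1 / α s) • x s - ∫ lam in s..t, Real.exp (-lam) • ε lam := by
  have hd : ∀ lam ∈ Set.uIcc s t,
      HasDerivAt (fun u => (α u)⁻¹ • x u) (-(Real.exp (-lam) • ε lam)) lam := by
    intro lam hl
    rw [Set.uIcc_of_le hst.le] at hl
    have h0 : α lam ≠ 0 := (hαpos lam).ne'
    have h1 : HasDerivAt (fun u => (α u)⁻¹) (-deriv α lam / α lam ^ 2) lam :=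
      (hα lam).hasDerivAt.fun_inv h0
    refine (h1.fun_smul (hx lam hl)).congr_deriv ?_
    rw [smul_sub, smul_smul, smul_smul]
    have e1 : (α lam)⁻¹ * (deriv α lam / α lam) = -(-deriv α lam / α lam ^ 2) := by
      field_simp
    have e2 : (α lam)⁻¹ * (α lam * Real.exp (-lam)) = Real.exp (-lam) := by
      field_simp
    rw [e1, e2, neg_smul]
    abel
  have hc : Continuous (fun lam => -(Real.exp (-lam) • ε lam)) := by fun_prop
  have h := integral_eq_sub_of_hasDerivAt hd (hc.intervalIntegrable s t)
  rw [intervalIntegral.integral_neg] at h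
  rw [one_div, one_div, sub_eq_add_neg, h]
  abel
end

section
/- Let E be a real Banach space, k ≥ 1, a ∈ ℝ, h > 0, and let ε : ℝ → E be k-times continuously differentiable on [a, a+h] with ‖ε^{(k)}(λ)‖ ≤ M for all λ ∈ [a, a+h]. Then ‖∫_{a}^{a+h} e^{−λ} ε(λ) dλ − Σ_{n=0}^{k−1} (∫_{a}^{a+h} e^{−λ} (λ−a)^n/n! dλ) • ε^{(n)}(a)‖ ≤ e^{−a} · M · h^{k+1} / (k+1)!. -/
open MeasureTheory intervalIntegral Finset

theorem taylor_sharp_bound_aux {E : Type*} [NormedAddCommGroup E] [NormedSpace ℝ E]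
    {f : ℝ → E} {a b C x : ℝ} {n : ℕ} (h : a < b)
    (hf : ContDiffOn ℝ (n + 1) f (Set.Icc a b)) (hx : x ∈ Set.Icc a b)
    (hC : ∀ y ∈ Set.Icc a b, ‖iteratedDerivWithin (n + 1) f (Set.Icc a b) y‖ ≤ C) :
    ‖f x - taylorWithinEval f n (Set.Icc a b) a x‖
      ≤ C * (x - a) ^ (n + 1) / ((n + 1).factorial : ℝ) := by
  have hf' : DifferentiableOn ℝ (iteratedDerivWithin n f (Set.Icc a b)) (Set.Icc a b) :=
    hf.differentiableOn_iteratedDerivWithin (mod_cast n.lt_succ_self) (uniqueDiffOn_Icc h)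
  have I : Set.Icc a x ⊆ Set.Icc a b := Set.Icc_subset_Icc_right hx.2
  have A : ∀ t ∈ Set.Icc a x, HasDerivWithinAt (fun y => taylorWithinEval f n (Set.Icc a b) y x)
      (((n.factorial : ℝ)⁻¹ * (x - t) ^ n) • iteratedDerivWithin (n + 1) f (Set.Icc a b) t)
      (Set.Icc a x) t := by
    intro t ht
    exact (hasDerivWithinAt_taylorWithinEval_at_Icc x h (I ht) hf.of_succ hf').mono I
  have hB : ∀ t : ℝ, HasDerivAt
      (fun t => C * ((x - a) ^ (n + 1) - (x - t) ^ (n + 1)) / ((n + 1).factorial : ℝ))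
      (((n.factorial : ℝ)⁻¹ * (x - t) ^ n) * C) t := by
    intro t
    have h1 := (((((hasDerivAt_id t).const_sub x).pow (n + 1)).const_sub
      ((x - a) ^ (n + 1))).const_mul C).div_const ((n + 1).factorial : ℝ)
    refine HasDerivAt.congr_deriv h1 ?_
    rw [Nat.factorial_succ]
    have : (n.factorial : ℝ) ≠ 0 := by positivity
    have : (n + 1 : ℝ) ≠ 0 := by positivity
    push_cast
    simp
    field_simp
  have key := image_norm_le_of_norm_deriv_right_le_deriv_boundary'
    (f := fun y => taylorWithinEval f n (Set.Icc a b) y x - taylorWithinEval f n (Set.Icc a b) a x)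
    (f' := fun t =>
      ((n.factorial : ℝ)⁻¹ * (x - t) ^ n) • iteratedDerivWithin (n + 1) f (Set.Icc a b) t)
    (a := a) (b := x)
    (B := fun t => C * ((x - a) ^ (n + 1) - (x - t) ^ (n + 1)) / ((n + 1).factorial : ℝ))
    (B' := fun t => ((n.factorial : ℝ)⁻¹ * (x - t) ^ n) * C)
    (fun t ht => ((A t ht).sub_const _).continuousWithinAt)
    (fun t ht => ((A t (Set.Ico_subset_Icc_self ht)).sub_const _).mono_of_mem_nhdsWithin
      (Icc_mem_nhdsGE_of_mem ht))
    (by simp)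
    (fun t ht => (hB t).continuousAt.continuousWithinAt)
    (fun t ht => (hB t).hasDerivWithinAt)
    (by
      intro t ht
      have : 0 ≤ x - t := by linarith [ht.2]
      rw [norm_smul, Real.norm_of_nonneg (by positivity)]
      exact mul_le_mul_of_nonneg_left (hC t (I (Set.Ico_subset_Icc_self ht))) (by positivity))
    (Set.right_mem_Icc.2 hx.1)
  simpa using key

/-- Local truncation error bound underlying the DPM-solver-k: replacing `ε` in the
exponentially weighted integral by its `(k-1)`-st order Taylor polynomial at `a`
incurs an error of order `O(h^{k+1})`. -/
theorem dpm_solver_k_truncation_error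
    {E : Type*} [NormedAddCommGroup E] [NormedSpace ℝ E] [CompleteSpace E]
    (k : ℕ) (hk : 1 ≤ k) (a h M : ℝ) (hh : 0 < h)
    (ε : ℝ → E) (hε : ContDiffOn ℝ k ε (Set.Icc a (a + h)))
    (hM : ∀ lam ∈ Set.Icc a (a + h),
      ‖iteratedDerivWithin k ε (Set.Icc a (a + h)) lam‖ ≤ M) :
    ‖(∫ lam in a..(a + h), Real.exp (-lam) • ε lam)
        - ∑ n ∈ Finset.range k,
            (∫ lam in a..(a + h), Real.exp (-lam) * (lam - a) ^ n / (n.factorial : ℝ)) •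
              iteratedDerivWithin n ε (Set.Icc a (a + h)) a‖
      ≤ Real.exp (-a) * M * h ^ (k + 1) / ((k + 1).factorial : ℝ) := by
  obtain ⟨n, rfl⟩ : ∃ n, k = n + 1 := ⟨k - 1, by omega⟩
  have hab : a < a + h := by linarith
  have hM0 : 0 ≤ M := (norm_nonneg _).trans (hM a (Set.left_mem_Icc.2 hab.le))
  have i1 : IntervalIntegrable (fun lam => Real.exp (-lam) • ε lam) volume a (a + h) := by
    apply ContinuousOn.intervalIntegrable
    rw [Set.uIcc_of_le hab.le]
    exact (by fun_prop : Continuous fun lam : ℝ => Real.exp (-lam)).continuousOn.smul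
      hε.continuousOn
  have i2 : ∀ m ∈ Finset.range (n + 1), IntervalIntegrable
      (fun lam => (Real.exp (-lam) * (lam - a) ^ m / (m.factorial : ℝ)) •
        iteratedDerivWithin m ε (Set.Icc a (a + h)) a) volume a (a + h) := by
    intro m _
    apply Continuous.intervalIntegrable
    fun_prop
  have e : (∫ lam in a..(a + h), Real.exp (-lam) • ε lam)
        - ∑ m ∈ Finset.range (n + 1),
            (∫ lam in a..(a + h), Real.exp (-lam) * (lam - a) ^ m / (m.factorial : ℝ)) •
              iteratedDerivWithin m ε (Set.Icc a (a + h)) a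
      = ∫ lam in a..(a + h), Real.exp (-lam) •
          (ε lam - taylorWithinEval ε n (Set.Icc a (a + h)) a lam) := by
    simp_rw [← intervalIntegral.integral_smul_const]
    rw [← intervalIntegral.integral_finsetSum i2, ← intervalIntegral.integral_sub i1]
    · congr 1
      ext lam
      rw [taylor_within_apply, smul_sub, Finset.smul_sum]
      congr 1
      refine Finset.sum_congr rfl fun m _ => ?_
      rw [smul_smul]
      congr 1
      ring
    · apply Continuous.intervalIntegrable
      fun_prop
  rw [e]
  have bound : ∀ lam ∈ Set.Ioc a (a + h), ‖Real.exp (-lam) •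
      (ε lam - taylorWithinEval ε n (Set.Icc a (a + h)) a lam)‖
      ≤ Real.exp (-a) * M / ((n + 1).factorial : ℝ) * (lam - a) ^ (n + 1) := by
    intro lam hl
    have hb := taylor_sharp_bound_aux hab (by exact_mod_cast hε) (Set.Ioc_subset_Icc_self hl) hM
    rw [norm_smul, Real.norm_of_nonneg (Real.exp_pos _).le]
    have he : Real.exp (-lam) ≤ Real.exp (-a) := Real.exp_le_exp.2 (by linarith [hl.1])
    calc _ ≤ Real.exp (-a) * (M * (lam - a) ^ (n + 1) / ((n + 1).factorial : ℝ)) :=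
          mul_le_mul he hb (norm_nonneg _) (Real.exp_pos _).le
      _ = _ := by ring
  refine (intervalIntegral.norm_integral_le_of_norm_le hab.le
    (Filter.Eventually.of_forall bound) (by
      apply Continuous.intervalIntegrable
      fun_prop)).trans (le_of_eq ?_)
  rw [intervalIntegral.integral_const_mul,
    intervalIntegral.integral_comp_sub_right (fun y => y ^ (n + 1)), integral_pow,
    Nat.factorial_succ (n + 1)]
  have : ((n + 1).factorial : ℝ) ≠ 0 := by positivity
  have : (n + 1 + 1 : ℝ) ≠ 0 := by positivity
  push_cast
  simp
  field_simp
end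

section
/- Let E be a real Banach space, α : ℝ → ℝ differentiable and strictly positive, and x : ℝ → E differentiable on [s,t] (s < t) satisfying x'(λ) = (α'(λ)/α(λ)) • x(λ) − (α(λ)e^{−λ}) • ε(λ) for all λ ∈ [s,t], where ε : ℝ → E is k-times continuously differentiable on [s,t] (k ≥ 1) with ‖ε^{(k)}(λ)‖ ≤ M on [s,t]. Set h := t − s. Then the DPM-solver-k one-step update satisfies ‖(1/α(t)) • x(t) − (1/α(s)) • x(s) + Σ_{n=0}^{k−1} (∫_{s}^{t} e^{−λ}(λ−s)^n/n! dλ) • ε^{(n)}(s)‖ ≤ e^{−s} · M · h^{k+1}/(k+1)!. -/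
open MeasureTheory intervalIntegral Finset

theorem taylor_bound_sharp {E : Type*} [NormedAddCommGroup E] [NormedSpace ℝ E]
    {f : ℝ → E} {a b C x : ℝ} {n : ℕ} (hab : a < b)
    (hf : ContDiffOn ℝ (n + 1) f (Set.Icc a b)) (hx : x ∈ Set.Icc a b)
    (hC : ∀ y ∈ Set.Icc a b, ‖iteratedDerivWithin (n + 1) f (Set.Icc a b) y‖ ≤ C) :
    ‖f x - taylorWithinEval f n (Set.Icc a b) a x‖
      ≤ C * (x - a) ^ (n + 1) / ((n + 1).factorial : ℝ) := by
  have hf' : DifferentiableOn ℝ (iteratedDerivWithin n f (Set.Icc a b)) (Set.Icc a b) :=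
    hf.differentiableOn_iteratedDerivWithin (mod_cast n.lt_succ_self) (uniqueDiffOn_Icc hab)
  have A : ∀ t ∈ Set.Icc a x, HasDerivWithinAt
      (fun y => taylorWithinEval f n (Set.Icc a b) y x - taylorWithinEval f n (Set.Icc a b) a x)
      (((↑n.factorial)⁻¹ * (x - t) ^ n) • iteratedDerivWithin (n + 1) f (Set.Icc a b) t)
      (Set.Icc a x) t := by
    intro t ht
    have I : Set.Icc a x ⊆ Set.Icc a b := Set.Icc_subset_Icc_right hx.2
    exact ((hasDerivWithinAt_taylorWithinEval_at_Icc x hab (I ht)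
      hf.of_succ hf').mono I).sub_const _
  have hB : ∀ y : ℝ, HasDerivAt
      (fun y => C * ((x - a) ^ (n + 1) - (x - y) ^ (n + 1)) / ((n + 1).factorial : ℝ))
      (C * ((↑n.factorial)⁻¹ * (x - y) ^ n)) y := by
    intro y
    have h1 := ((((((hasDerivAt_id y).const_sub x).pow (n + 1)).const_sub
      ((x - a) ^ (n + 1))).const_mul C).div_const ((n + 1).factorial : ℝ))
    refine HasDerivAt.congr_deriv h1 ?_
    have : (n.factorial : ℝ) ≠ 0 := by positivity
    have : (n : ℝ) + 1 ≠ 0 := by positivity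
    simp [Nat.factorial_succ]
    field_simp
  have key := image_norm_le_of_norm_deriv_right_le_deriv_boundary
    (fun t ht => (A t ht).continuousWithinAt)
    (fun t ht => (A t (Set.Ico_subset_Icc_self ht)).mono_of_mem_nhdsWithin
      (Icc_mem_nhdsGE_of_mem ht)) (by simp) hB
    (by
      intro y hy
      have h0 : 0 ≤ (↑n.factorial)⁻¹ * (x - y) ^ n := by
        have := sub_nonneg.2 hy.2.le
        positivity
      rw [norm_smul, Real.norm_of_nonneg h0, mul_comm]
      exact mul_le_mul_of_nonneg_right (hC y ⟨hy.1, hy.2.le.trans hx.2⟩) h0)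
    (Set.right_mem_Icc.2 hx.1)
  simpa using key

/-- Precise form of the DPM-solver-k one-step update (Eq. (3) of the paper): combining the
exact exponential-integrator solution formula with the `(k-1)`-st order Taylor expansion of
the denoising function `ε` at `λ = s`, the local error is `O(h^{k+1})` with `h = t - s`. -/
theorem dpm_solver_k_one_step_error
    {E : Type*} [NormedAddCommGroup E] [NormedSpace ℝ E] [CompleteSpace E]
    (α : ℝ → ℝ) (hα : Differentiable ℝ α) (hαpos : ∀ lam, 0 < α lam)
    (x : ℝ → E) (ε : ℝ → E) (s t : ℝ) (hst : s < t)
    (k : ℕ) (hk : 1 ≤ k) (M : ℝ)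
    (hx : ∀ lam ∈ Set.Icc s t,
      HasDerivAt x ((deriv α lam / α lam) • x lam
        - (α lam * Real.exp (-lam)) • ε lam) lam)
    (hε : ContDiffOn ℝ k ε (Set.Icc s t))
    (hM : ∀ lam ∈ Set.Icc s t,
      ‖iteratedDerivWithin k ε (Set.Icc s t) lam‖ ≤ M) :
    ‖(1 / α t) • x t - (1 / α s) • x s
        + ∑ n ∈ Finset.range k,
            (∫ lam in s..t, Real.exp (-lam) * (lam - s) ^ n / (n.factorial : ℝ)) •
              iteratedDerivWithin n ε (Set.Icc s t) s‖
      ≤ Real.exp (-s) * M * (t - s) ^ (k + 1) / ((k + 1).factorial : ℝ) := by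
  obtain ⟨m, rfl⟩ : ∃ m, k = m + 1 := ⟨k - 1, by omega⟩
  have hM0 : 0 ≤ M := (norm_nonneg _).trans (hM s ⟨le_rfl, hst.le⟩)
  have hF : ∀ u ∈ Set.Icc s t, HasDerivAt
      (fun u => (1 / α u) • x u - (1 / α s) • x s
        + ∑ n ∈ Finset.range (m + 1),
            (∫ lam in s..u, Real.exp (-lam) * (lam - s) ^ n / (n.factorial : ℝ)) •
              iteratedDerivWithin n ε (Set.Icc s t) s)
      (-(Real.exp (-u) • (ε u - taylorWithinEval ε m (Set.Icc s t) s u))) u := by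
    intro u hu
    have hne : α u ≠ 0 := (hαpos u).ne'
    have h1 : HasDerivAt (fun u => (1 / α u) • x u - (1 / α s) • x s)
        (-(Real.exp (-u) • ε u)) u := by
      have h := (((hα u).hasDerivAt.inv hne).smul (hx u hu)).sub_const ((1 / α s) • x s)
      simp only [one_div]
      simp only [one_div] at h
      refine HasDerivAt.congr_deriv h ?_
      simp only [Pi.inv_apply, smul_sub, smul_smul]
      have e1 : (α u)⁻¹ * (deriv α u / α u) = deriv α u / α u ^ 2 := by field_simp
      have e2 : (α u)⁻¹ * (α u * Real.exp (-u)) = Real.exp (-u) := by field_simp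
      rw [e1, e2, neg_div, neg_smul]
      abel
    have h2 : HasDerivAt (fun u => ∑ n ∈ Finset.range (m + 1),
            (∫ lam in s..u, Real.exp (-lam) * (lam - s) ^ n / (n.factorial : ℝ)) •
              iteratedDerivWithin n ε (Set.Icc s t) s)
        (∑ n ∈ Finset.range (m + 1), (Real.exp (-u) * (u - s) ^ n / (n.factorial : ℝ)) •
              iteratedDerivWithin n ε (Set.Icc s t) s) u := by
      refine HasDerivAt.fun_sum fun n _ => HasDerivAt.smul_const ?_ _
      have hc : Continuous fun lam : ℝ =>
          Real.exp (-lam) * (lam - s) ^ n / (n.factorial : ℝ) := by fun_prop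
      exact hc.integral_hasStrictDerivAt s u |>.hasDerivAt
    refine HasDerivAt.congr_deriv (h1.add h2) ?_
    symm
    rw [taylor_within_apply, smul_sub, Finset.smul_sum, neg_sub, sub_eq_add_neg, add_comm]
    congr 1
    refine Finset.sum_congr rfl fun n _ => ?_
    rw [smul_smul]
    congr 1
    ring
  have hB : ∀ u : ℝ, HasDerivAt
      (fun u => Real.exp (-s) * M * (u - s) ^ (m + 1 + 1) / ((m + 1 + 1).factorial : ℝ))
      (Real.exp (-s) * (M * (u - s) ^ (m + 1) / ((m + 1).factorial : ℝ))) u := by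
    intro u
    have h1 := ((((hasDerivAt_id u).sub_const s).pow (m + 1 + 1)).const_mul
      (Real.exp (-s) * M)).div_const ((m + 1 + 1).factorial : ℝ)
    refine HasDerivAt.congr_deriv h1 ?_
    rw [Nat.factorial_succ (m + 1)]
    have : ((m + 1).factorial : ℝ) ≠ 0 := by positivity
    have : (m : ℝ) + 1 + 1 ≠ 0 := by positivity
    push_cast
    simp
    field_simp
  exact image_norm_le_of_norm_deriv_right_le_deriv_boundary
    (fun u hu => (hF u hu).continuousAt.continuousWithinAt)
    (fun u hu => (hF u (Set.Ico_subset_Icc_self hu)).hasDerivWithinAt) (by simp) hB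
    (by
      intro u hu
      rw [norm_neg, norm_smul, Real.norm_of_nonneg (Real.exp_pos _).le]
      have hu' := Set.Ico_subset_Icc_self hu
      exact mul_le_mul (Real.exp_le_exp.2 (neg_le_neg hu.1))
        (taylor_bound_sharp hst (by exact_mod_cast hε) hu' hM) (norm_nonneg _)
        (Real.exp_pos _).le)
    (Set.right_mem_Icc.2 hst.le)
end
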